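/- arXiv:1807.07819 — 3 statements merged into one kernel-verified Lean document; each statement's English description precedes it below -/
import Mathlib

section
/- Consider the closed loop x⁺ = Φ_K x + B_p p with Φ_K := Φ + G K C, C_K := C_q + D_q K C, Ā := K C (Φ_K − I), B̄ := K C B_p, where admissible uncertainties satisfy ‖p‖₂² ≤ ‖C_K x‖₂². Let P ≻ 0 be symmetric, ρ > 0, λ > 0, R_x ⪰ 0, R_u ⪰ 0, δ > 0, and σ ≥ 0 with σ I − B̄ᵀ B̄ ≻ 0; define T := δ^{-2}( Āᵀ Ā + σ C_Kᵀ C_K + Āᵀ B̄ (σ I − B̄ᵀ B̄)^{-1} B̄ᵀ Ā ). Assume: (i) the block matrix [[Φ_Kᵀ P Φ_K − P + (K C)ᵀ R_u (K C) + R_x + λ C_Kᵀ C_K , Φ_Kᵀ P B_p],[B_pᵀ P Φ_K , B_pᵀ P B_p − λ I]] is negative semidefinite; (ii) every x with xᵀ P x ≤ ρ satisfies xᵀ T x ≤ 1. Then the ellipsoid ζ := {x : xᵀ P x ≤ ρ} is robustly positively invariant and respects the input-rate bound: for every x ∈ ζ and every p with ‖p‖₂² ≤ ‖C_K x‖₂²,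 one has (Φ_K x + B_p p)ᵀ P (Φ_K x + B_p p) ≤ ρ and ‖K C (Φ_K x + B_p p) − K C x‖₂² ≤ δ². -/
/-!
Both bounds are S-procedure arguments: a quadratic inequality in `(x, p)` plus a nonnegative
multiple of `‖CK x‖² - ‖p‖² ≥ 0`.

Invariance: evaluating the block matrix inequality at the stacked vector `(x, p)` gives
`V(x⁺) - V(x) + ‖u‖²_{Ru} + ‖x‖²_{Rx} + lam (‖CK x‖² - ‖p‖²) ≤ 0` with `V(x) = xᵀ Pm x`, so
`V(x⁺) ≤ V(x) ≤ ρ`.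

Rate bound: the input increment is `Ab x + Bb p`. With `M = σ I - Bbᵀ Bb ≻ 0`, the matrix Young
inequality `two_mul_dotProduct_le` bounds the cross term by `pᵀ M p + bᵀ M⁻¹ b`, where
`b = Bbᵀ Ab x`. Hence `‖Ab x + Bb p‖² ≤ ‖Ab x‖² + σ ‖p‖² + bᵀ M⁻¹ b ≤ δ² xᵀ T x ≤ δ²`.
-/

open Matrix

theorem dotProduct_transpose_mulVec_eq {k l : ℕ} (A : Matrix (Fin k) (Fin l) ℝ)
    (x : Fin l → ℝ) (y : Fin k → ℝ) : x ⬝ᵥ (Aᵀ *ᵥ y) = (A *ᵥ x) ⬝ᵥ y := by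
  rw [dotProduct_mulVec, vecMul_transpose]

theorem posSemidef_dotProduct_nonneg {k : Type*} [Fintype k] {M : Matrix k k ℝ}
    (hM : M.PosSemidef) (x : k → ℝ) : 0 ≤ x ⬝ᵥ (M *ᵥ x) := by
  simpa using hM.dotProduct_mulVec_nonneg x

/-- Matrix Young inequality, from expanding `0 ≤ (p - M⁻¹ b)ᵀ M (p - M⁻¹ b)`. -/
theorem two_mul_dotProduct_le {k : ℕ} {M : Matrix (Fin k) (Fin k) ℝ} (hM : M.PosDef)
    (p b : Fin k → ℝ) : 2 * (p ⬝ᵥ b) ≤ p ⬝ᵥ (M *ᵥ p) + b ⬝ᵥ (M⁻¹ *ᵥ b) := by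
  have hsymm : Mᵀ = M := by simpa using hM.isHermitian.eq
  have hMw : M *ᵥ (M⁻¹ *ᵥ b) = b := by
    rw [mulVec_mulVec, mul_nonsing_inv _ ((isUnit_iff_isUnit_det M).1 hM.isUnit), one_mulVec]
  have hwMp : (M⁻¹ *ᵥ b) ⬝ᵥ (M *ᵥ p) = p ⬝ᵥ b := by
    have h := dotProduct_transpose_mulVec_eq M (M⁻¹ *ᵥ b) p
    rw [hsymm, hMw] at h
    rw [h, dotProduct_comm]
  have h0 := posSemidef_dotProduct_nonneg hM.posSemidef (p - M⁻¹ *ᵥ b)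
  rw [mulVec_sub, hMw, sub_dotProduct, dotProduct_sub, dotProduct_sub, hwMp,
    dotProduct_comm (M⁻¹ *ᵥ b) b] at h0
  linarith

theorem stmt_9
    {n m q ny : ℕ}
    (Φ : Matrix (Fin n) (Fin n) ℝ) (G : Matrix (Fin n) (Fin m) ℝ)
    (Bp : Matrix (Fin n) (Fin q) ℝ)
    (Cq : Matrix (Fin q) (Fin n) ℝ) (Dq : Matrix (Fin q) (Fin m) ℝ)
    (C : Matrix (Fin ny) (Fin n) ℝ) (K : Matrix (Fin m) (Fin ny) ℝ)
    (ΦK : Matrix (Fin n) (Fin n) ℝ) (hΦK : ΦK = Φ + G * K * C)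
    (CK : Matrix (Fin q) (Fin n) ℝ) (hCK : CK = Cq + Dq * K * C)
    (Ab : Matrix (Fin m) (Fin n) ℝ) (hAb : Ab = K * C * (ΦK - 1))
    (Bb : Matrix (Fin m) (Fin q) ℝ) (hBb : Bb = K * C * Bp)
    (Pm : Matrix (Fin n) (Fin n) ℝ) (hPm : Pm.PosDef) (hPms : Pm.IsSymm)
    (ρ lam δ σ : ℝ) (hρ : 0 < ρ) (hlam : 0 < lam) (hδ : 0 < δ) (hσ : 0 ≤ σ)
    (Rx : Matrix (Fin n) (Fin n) ℝ) (hRx : Rx.PosSemidef)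
    (Ru : Matrix (Fin m) (Fin m) ℝ) (hRu : Ru.PosSemidef)
    (hpos : (σ • (1 : Matrix (Fin q) (Fin q) ℝ) - Bbᵀ * Bb).PosDef)
    (T : Matrix (Fin n) (Fin n) ℝ)
    (hT : T = (δ ^ 2)⁻¹ •
      (Abᵀ * Ab + σ • (CKᵀ * CK) +
        Abᵀ * Bb * (σ • (1 : Matrix (Fin q) (Fin q) ℝ) - Bbᵀ * Bb)⁻¹ * Bbᵀ * Ab))
    (hLMI : (-(Matrix.fromBlocks
        (ΦKᵀ * Pm * ΦK - Pm + (K * C)ᵀ * Ru * (K * C) + Rx + lam • (CKᵀ * CK))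
        (ΦKᵀ * Pm * Bp)
        (Bpᵀ * Pm * ΦK)
        (Bpᵀ * Pm * Bp - lam • (1 : Matrix (Fin q) (Fin q) ℝ)))).PosSemidef)
    (hTP : ∀ x : Fin n → ℝ, x ⬝ᵥ (Pm *ᵥ x) ≤ ρ → x ⬝ᵥ (T *ᵥ x) ≤ 1) :
    ∀ (x : Fin n → ℝ) (p : Fin q → ℝ),
      x ⬝ᵥ (Pm *ᵥ x) ≤ ρ →
      p ⬝ᵥ p ≤ (CK *ᵥ x) ⬝ᵥ (CK *ᵥ x) →
      (ΦK *ᵥ x + Bp *ᵥ p) ⬝ᵥ (Pm *ᵥ (ΦK *ᵥ x + Bp *ᵥ p)) ≤ ρ ∧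
      ((K * C) *ᵥ (ΦK *ᵥ x + Bp *ᵥ p) - (K * C) *ᵥ x) ⬝ᵥ
        ((K * C) *ᵥ (ΦK *ᵥ x + Bp *ᵥ p) - (K * C) *ᵥ x) ≤ δ ^ 2 := by
  intro x p hx hp
  constructor
  · have h := posSemidef_dotProduct_nonneg hLMI (Sum.elim x p)
    have hRx0 := posSemidef_dotProduct_nonneg hRx x
    have hRu0 := posSemidef_dotProduct_nonneg hRu ((K * C) *ᵥ x)
    simp only [neg_mulVec, dotProduct_neg, fromBlocks_mulVec, Sum.elim_comp_inl,
      Sum.elim_comp_inr, sumElim_dotProduct_sumElim, add_mulVec, sub_mulVec, smul_mulVec,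
      one_mulVec, dotProduct_add, dotProduct_sub, dotProduct_smul, smul_eq_mul] at h
    simp only [Matrix.mul_assoc (_ᵀ), ← mulVec_mulVec _ (_ᵀ),
      dotProduct_transpose_mulVec_eq] at h
    simp only [← mulVec_mulVec] at h hRu0
    simp only [mulVec_add, dotProduct_add, add_dotProduct]
    have hS := mul_le_mul_of_nonneg_left hp hlam.le
    linarith
  · have hu : (K * C) *ᵥ (ΦK *ᵥ x + Bp *ᵥ p) - (K * C) *ᵥ x = Ab *ᵥ x + Bb *ᵥ p := by
      rw [hAb, hBb, ← mulVec_mulVec x (K * C), ← mulVec_mulVec p (K * C), sub_mulVec,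
        one_mulVec, mulVec_add, mulVec_sub]
      abel
    rw [hu]
    have hY := two_mul_dotProduct_le hpos p (Bbᵀ *ᵥ (Ab *ᵥ x))
    have hTx := hTP x hx
    rw [hT, smul_mulVec, dotProduct_smul, smul_eq_mul, inv_mul_le_iff₀ (by positivity),
      mul_one] at hTx
    generalize (σ • (1 : Matrix (Fin q) (Fin q) ℝ) - Bbᵀ * Bb)⁻¹ = N at hY hTx
    -- `bᵀ N b` is moved to the shape `xᵀ Abᵀ Bb N Bbᵀ Ab x` in which it occurs in `T`.
    have hN : (Bbᵀ *ᵥ (Ab *ᵥ x)) ⬝ᵥ (N *ᵥ (Bbᵀ *ᵥ (Ab *ᵥ x))) =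
        x ⬝ᵥ ((Abᵀ * Bb * N * Bbᵀ * Ab) *ᵥ x) := by
      rw [← dotProduct_transpose_mulVec_eq, transpose_transpose,
        ← dotProduct_transpose_mulVec_eq]
      simp only [mulVec_mulVec, Matrix.mul_assoc]
    rw [hN, dotProduct_transpose_mulVec_eq, sub_mulVec, smul_mulVec, one_mulVec,
      dotProduct_sub, dotProduct_smul, smul_eq_mul, ← mulVec_mulVec,
      dotProduct_transpose_mulVec_eq] at hY
    rw [add_mulVec, add_mulVec, dotProduct_add, dotProduct_add, smul_mulVec, dotProduct_smul,
      smul_eq_mul, ← mulVec_mulVec x (Abᵀ) Ab, ← mulVec_mulVec x (CKᵀ) CK,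
      dotProduct_transpose_mulVec_eq, dotProduct_transpose_mulVec_eq] at hTx
    have hS := mul_le_mul_of_nonneg_left hp hσ
    rw [dotProduct_add, add_dotProduct, add_dotProduct, dotProduct_comm (Ab *ᵥ x) (Bb *ᵥ p)]
    linarith
end

section
/- Fix k ≥ 1. Let x = (y, x_na) ∈ ℝ^{ny}×ℝ^{n−ny}, inputs c₀,…,c_k ∈ ℝ^m, uncertainties p₀,…,p_{k−1} ∈ ℝ^q, and predictions x̂₀ := x, x̂_{j+1} := Φ_K x̂_j + G c_j + B_p p_j. Write w := (x_na, p₀, …, p_{k−1}) and z := (y, c₀, …, c_k). Suppose symmetric F̂, matrix D̂, symmetric Ê satisfy ‖K C x̂_k + c_k‖₂² = wᵀ F̂ w + 2 wᵀ D̂ z + zᵀ Ê z identically in (w,z); for each i ∈ {0,…,k−1}, symmetric Zᵢ, matrix Mᵢ, symmetric Nᵢ satisfy ‖C_K x̂ᵢ + D_q cᵢ‖₂² − ‖pᵢ‖₂² = wᵀ Zᵢ w + 2 wᵀ Mᵢ z + zᵀ Nᵢ z identically; and S̄ := blockdiag(−S, 0). Let α₀,…,α_k ≥ 0 with Θ :=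 −F̂ − Σ_{i=0}^{k−1} αᵢ Zᵢ − α_k S̄ ≻ 0, Û with Ûᵀ Û = Ê + Σ αᵢ Nᵢ + (D̂ + Σ αᵢ Mᵢ)ᵀ Θ^{-1} (D̂ + Σ αᵢ Mᵢ), and suppose [[ū² − α_k , −(Û z)ᵀ],[−Û z , I]] ⪰ 0. Then for all x_na with x_naᵀ S x_na ≤ 1 and all p₀,…,p_{k−1} with ‖pᵢ‖₂² ≤ ‖C_K x̂ᵢ + D_q cᵢ‖₂² for each i, the predicted control input satisfies ‖K C x̂_k + c_k‖₂² ≤ ū². -/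
/-!
The proof is an S-procedure argument. Adding to the squared input norm the nonnegative terms
`αᵢ (‖C_K x̂ᵢ + D_q cᵢ‖² - ‖pᵢ‖²)` and `α' (1 - xnaᵀ S xna)` gives the upper bound
`-wᵀ Θ w + 2 wᵀ D z + zᵀ E z + α'`, where `D = Dm + ∑ αᵢ Mᵢ` and `E = Em + ∑ αᵢ Nᵢ`.
Completing the square in `w` (`two_mul_dotProduct_le_of_posDef`) bounds it by
`zᵀ (E + Dᵀ Θ⁻¹ D) z + α' = ‖L z‖² + α'`, and the LMI says that this is at most `ub ^ 2`
(`dotProduct_self_le_of_lmi`).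
-/

open Matrix

/-- The `j`-step-ahead prediction `x̂_j` generated by
`x̂_0 = x0`, `x̂_{j+1} = Φ_K x̂_j + G c_j + B_p p_j`. -/
def pred {n : Type*} [Fintype n] {m q : ℕ} (ΦK : Matrix n n ℝ)
    (G : Matrix n (Fin m) ℝ) (Bp : Matrix n (Fin q) ℝ)
    (x0 : n → ℝ) (c : ℕ → Fin m → ℝ) (p : ℕ → Fin q → ℝ) : ℕ → n → ℝ
  | 0 => x0
  | j + 1 => ΦK *ᵥ pred ΦK G Bp x0 c p j + G *ᵥ c j + Bp *ᵥ p j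

/-- Young's inequality for a positive definite weight, from
`0 ≤ (w - Θ⁻¹ v)ᵀ Θ (w - Θ⁻¹ v)`. -/
lemma two_mul_dotProduct_le_of_posDef {ι : Type*} [Fintype ι] [DecidableEq ι]
    {Θ : Matrix ι ι ℝ} (hΘ : Θ.PosDef) (w v : ι → ℝ) :
    2 * (w ⬝ᵥ v) ≤ w ⬝ᵥ (Θ *ᵥ w) + v ⬝ᵥ (Θ⁻¹ *ᵥ v) := by
  have hdet : IsUnit Θ.det := (Matrix.isUnit_iff_isUnit_det _).1 hΘ.isUnit
  have hu : Θ *ᵥ (Θ⁻¹ *ᵥ v) = v := by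
    rw [Matrix.mulVec_mulVec, Matrix.mul_nonsing_inv _ hdet, Matrix.one_mulVec]
  have hsymm : Θᵀ = Θ := by simpa using hΘ.isHermitian.eq
  have hcross : (Θ⁻¹ *ᵥ v) ⬝ᵥ (Θ *ᵥ w) = w ⬝ᵥ v := by
    rw [Matrix.dotProduct_mulVec, ← Matrix.mulVec_transpose, hsymm, hu, dotProduct_comm]
  have h := hΘ.posSemidef.dotProduct_mulVec_nonneg (w - Θ⁻¹ *ᵥ v)
  simp only [star_trivial, Matrix.mulVec_sub, sub_dotProduct, dotProduct_sub, hu, hcross] at h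
  rw [dotProduct_comm (Θ⁻¹ *ᵥ v) v] at h
  linarith

/-- One direction of the Schur complement criterion, obtained by evaluating the block
quadratic form at `(1, v)`. -/
lemma dotProduct_self_le_of_lmi {s : ℕ} (a : ℝ) (v : Fin s → ℝ)
    (h : (Matrix.fromBlocks (Matrix.of fun (_ : Fin 1) (_ : Fin 1) => a)
      (Matrix.of fun (_ : Fin 1) (j : Fin s) => -(v j))
      (Matrix.of fun (i : Fin s) (_ : Fin 1) => -(v i))
      (1 : Matrix (Fin s) (Fin s) ℝ)).PosSemidef) :
    v ⬝ᵥ v ≤ a := by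
  have h1 := h.dotProduct_mulVec_nonneg (Sum.elim (fun _ => 1) v)
  have h2 : (Matrix.of fun (_ : Fin 1) (j : Fin s) => -(v j)) *ᵥ v = fun _ => -(v ⬝ᵥ v) := by
    ext i
    simp [Matrix.mulVec, dotProduct]
  have h3 : (Matrix.of fun (i : Fin s) (_ : Fin 1) => -(v i)) *ᵥ (fun _ => (1 : ℝ)) = -v := by
    ext i
    simp [Matrix.mulVec, dotProduct]
  rw [star_trivial, Matrix.fromBlocks_mulVec, sumElim_dotProduct_sumElim] at h1
  simp only [Sum.elim_comp_inl, Sum.elim_comp_inr, h2, h3, Matrix.one_mulVec,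
    neg_add_cancel, dotProduct_zero] at h1
  simp [Matrix.mulVec, dotProduct] at h1
  simp only [dotProduct]
  linarith

theorem stmt_13
    {ny nna m q s : ℕ} (k : ℕ) (hk : 1 ≤ k)
    (ΦK : Matrix (Fin ny ⊕ Fin nna) (Fin ny ⊕ Fin nna) ℝ)
    (G : Matrix (Fin ny ⊕ Fin nna) (Fin m) ℝ)
    (Bp : Matrix (Fin ny ⊕ Fin nna) (Fin q) ℝ)
    (CK : Matrix (Fin q) (Fin ny ⊕ Fin nna) ℝ)
    (Dq : Matrix (Fin q) (Fin m) ℝ)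
    (C : Matrix (Fin ny) (Fin ny ⊕ Fin nna) ℝ) (K : Matrix (Fin m) (Fin ny) ℝ)
    (ub : ℝ) (hub : 0 < ub)
    (S : Matrix (Fin nna) (Fin nna) ℝ) (hS : S.PosSemidef)
    (y : Fin ny → ℝ) (c : ℕ → Fin m → ℝ)
    (Fm : Matrix (Fin nna ⊕ (Fin k × Fin q)) (Fin nna ⊕ (Fin k × Fin q)) ℝ) (hFms : Fm.IsSymm)
    (Dm : Matrix (Fin nna ⊕ (Fin k × Fin q)) (Fin ny ⊕ (Fin (k + 1) × Fin m)) ℝ)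
    (Em : Matrix (Fin ny ⊕ (Fin (k + 1) × Fin m)) (Fin ny ⊕ (Fin (k + 1) × Fin m)) ℝ) (hEms : Em.IsSymm)
    (hFDE : ∀ (y' : Fin ny → ℝ) (xna' : Fin nna → ℝ)
        (c' : ℕ → Fin m → ℝ) (p' : ℕ → Fin q → ℝ),
      ((K * C) *ᵥ pred ΦK G Bp (Sum.elim y' xna') c' p' k + c' k) ⬝ᵥ
          ((K * C) *ᵥ pred ΦK G Bp (Sum.elim y' xna') c' p' k + c' k)
      = (Sum.elim xna' (fun ij => p' ij.1 ij.2) : Fin nna ⊕ (Fin k × Fin q) → ℝ) ⬝ᵥ (Fm *ᵥ (Sum.elim xna' (fun ij => p' ij.1 ij.2) : Fin nna ⊕ (Fin k × Fin q) → ℝ)) +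
        2 * ((Sum.elim xna' (fun ij => p' ij.1 ij.2) : Fin nna ⊕ (Fin k × Fin q) → ℝ) ⬝ᵥ (Dm *ᵥ (Sum.elim y' (fun ij => c' ij.1 ij.2) : Fin ny ⊕ (Fin (k + 1) × Fin m) → ℝ))) +
        (Sum.elim y' (fun ij => c' ij.1 ij.2) : Fin ny ⊕ (Fin (k + 1) × Fin m) → ℝ) ⬝ᵥ (Em *ᵥ (Sum.elim y' (fun ij => c' ij.1 ij.2) : Fin ny ⊕ (Fin (k + 1) × Fin m) → ℝ)))
    (Zm : Fin k → Matrix (Fin nna ⊕ (Fin k × Fin q)) (Fin nna ⊕ (Fin k × Fin q)) ℝ) (hZs : ∀ i, (Zm i).IsSymm)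
    (Mm : Fin k → Matrix (Fin nna ⊕ (Fin k × Fin q)) (Fin ny ⊕ (Fin (k + 1) × Fin m)) ℝ)
    (Nm : Fin k → Matrix (Fin ny ⊕ (Fin (k + 1) × Fin m)) (Fin ny ⊕ (Fin (k + 1) × Fin m)) ℝ) (hNs : ∀ i, (Nm i).IsSymm)
    (hZMN : ∀ (i : Fin k) (y' : Fin ny → ℝ) (xna' : Fin nna → ℝ)
        (c' : ℕ → Fin m → ℝ) (p' : ℕ → Fin q → ℝ),
      (CK *ᵥ pred ΦK G Bp (Sum.elim y' xna') c' p' (i : ℕ) + Dq *ᵥ c' i) ⬝ᵥ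
          (CK *ᵥ pred ΦK G Bp (Sum.elim y' xna') c' p' (i : ℕ) + Dq *ᵥ c' i) -
        (p' i) ⬝ᵥ (p' i)
      = (Sum.elim xna' (fun ij => p' ij.1 ij.2) : Fin nna ⊕ (Fin k × Fin q) → ℝ) ⬝ᵥ ((Zm i) *ᵥ (Sum.elim xna' (fun ij => p' ij.1 ij.2) : Fin nna ⊕ (Fin k × Fin q) → ℝ)) +
        2 * ((Sum.elim xna' (fun ij => p' ij.1 ij.2) : Fin nna ⊕ (Fin k × Fin q) → ℝ) ⬝ᵥ ((Mm i) *ᵥ (Sum.elim y' (fun ij => c' ij.1 ij.2) : Fin ny ⊕ (Fin (k + 1) × Fin m) → ℝ))) +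
        (Sum.elim y' (fun ij => c' ij.1 ij.2) : Fin ny ⊕ (Fin (k + 1) × Fin m) → ℝ) ⬝ᵥ ((Nm i) *ᵥ (Sum.elim y' (fun ij => c' ij.1 ij.2) : Fin ny ⊕ (Fin (k + 1) × Fin m) → ℝ)))
    (Sbar : Matrix (Fin nna ⊕ (Fin k × Fin q)) (Fin nna ⊕ (Fin k × Fin q)) ℝ)
    (hSbar : Sbar = Matrix.fromBlocks (-S) 0 0 0)
    (α : Fin k → ℝ) (hα : ∀ i, 0 ≤ α i) (α' : ℝ) (hα'0 : 0 ≤ α')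
    (Θ : Matrix (Fin nna ⊕ (Fin k × Fin q)) (Fin nna ⊕ (Fin k × Fin q)) ℝ)
    (hΘ : Θ = -Fm - (∑ i, α i • Zm i) - α' • Sbar) (hΘpos : Θ.PosDef)
    (L : Matrix (Fin s) (Fin ny ⊕ (Fin (k + 1) × Fin m)) ℝ)
    (hL : Lᵀ * L = Em + (∑ i, α i • Nm i) +
      (Dm + ∑ i, α i • Mm i)ᵀ * Θ⁻¹ * (Dm + ∑ i, α i • Mm i))
    (hLMI : (Matrix.fromBlocks
        (Matrix.of fun (_ : Fin 1) (_ : Fin 1) => ub ^ 2 - α')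
        (Matrix.of fun (_ : Fin 1) (j : Fin s) => -((L *ᵥ (Sum.elim y (fun ij => c ij.1 ij.2) : Fin ny ⊕ (Fin (k + 1) × Fin m) → ℝ)) j))
        (Matrix.of fun (i : Fin s) (_ : Fin 1) => -((L *ᵥ (Sum.elim y (fun ij => c ij.1 ij.2) : Fin ny ⊕ (Fin (k + 1) × Fin m) → ℝ)) i))
        (1 : Matrix (Fin s) (Fin s) ℝ)).PosSemidef) :
    ∀ (xna : Fin nna → ℝ) (p : ℕ → Fin q → ℝ),
      xna ⬝ᵥ (S *ᵥ xna) ≤ 1 →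
      (∀ i : Fin k,
        (p i) ⬝ᵥ (p i) ≤
          (CK *ᵥ pred ΦK G Bp (Sum.elim y xna) c p (i : ℕ) + Dq *ᵥ c i) ⬝ᵥ
            (CK *ᵥ pred ΦK G Bp (Sum.elim y xna) c p (i : ℕ) + Dq *ᵥ c i)) →
      (((K * C) *ᵥ pred ΦK G Bp (Sum.elim y xna) c p k + c k) ⬝ᵥ
          ((K * C) *ᵥ pred ΦK G Bp (Sum.elim y xna) c p k + c k)) ≤ ub ^ 2 := by
  intro xna p hxna hp
  have hu := hFDE y xna c p
  have hi := fun i => hZMN i y xna c p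
  -- The weighted form of the quadratic constraints on the uncertainties.
  have hsum : 0 ≤ ∑ i, α i * ((CK *ᵥ pred ΦK G Bp (Sum.elim y xna) c p (i : ℕ) + Dq *ᵥ c i) ⬝ᵥ
      (CK *ᵥ pred ΦK G Bp (Sum.elim y xna) c p (i : ℕ) + Dq *ᵥ c i) - (p i) ⬝ᵥ (p i)) :=
    Finset.sum_nonneg fun i _ => mul_nonneg (hα i) (sub_nonneg.2 (hp i))
  simp only [hi] at hsum
  have hLz := dotProduct_self_le_of_lmi _ _ hLMI
  have hSw : (Sum.elim xna (fun ij => p ij.1 ij.2) : Fin nna ⊕ (Fin k × Fin q) → ℝ) ⬝ᵥ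
      (Sbar *ᵥ (Sum.elim xna (fun ij => p ij.1 ij.2) : Fin nna ⊕ (Fin k × Fin q) → ℝ))
      = -(xna ⬝ᵥ (S *ᵥ xna)) := by
    rw [hSbar, Matrix.fromBlocks_mulVec, sumElim_dotProduct_sumElim]
    simp [Matrix.neg_mulVec]
  rw [hu]
  clear hu hi hp hFDE hZMN hLMI
  generalize (Sum.elim xna (fun ij => p ij.1 ij.2) : Fin nna ⊕ (Fin k × Fin q) → ℝ) = w at *
  generalize (Sum.elim y (fun ij => c ij.1 ij.2) :
    Fin ny ⊕ (Fin (k + 1) × Fin m) → ℝ) = z at *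
  have hsq := two_mul_dotProduct_le_of_posDef hΘpos w ((Dm + ∑ i, α i • Mm i) *ᵥ z)
  have hLe : (L *ᵥ z) ⬝ᵥ (L *ᵥ z) = z ⬝ᵥ (Em *ᵥ z) + ∑ i, α i * (z ⬝ᵥ (Nm i *ᵥ z)) +
      ((Dm + ∑ i, α i • Mm i) *ᵥ z) ⬝ᵥ (Θ⁻¹ *ᵥ ((Dm + ∑ i, α i • Mm i) *ᵥ z)) := by
    have h1 : (L *ᵥ z) ⬝ᵥ (L *ᵥ z) = z ⬝ᵥ ((Lᵀ * L) *ᵥ z) := by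
      rw [← Matrix.mulVec_mulVec, Matrix.dotProduct_mulVec z, Matrix.vecMul_transpose]
    rw [h1, hL, Matrix.add_mulVec, Matrix.add_mulVec, dotProduct_add, dotProduct_add,
      ← Matrix.mulVec_mulVec, ← Matrix.mulVec_mulVec, Matrix.dotProduct_mulVec z (_ᵀ),
      Matrix.vecMul_transpose, Matrix.sum_mulVec, dotProduct_sum]
    simp only [Matrix.smul_mulVec, dotProduct_smul, smul_eq_mul]
  have hΘw : w ⬝ᵥ (Θ *ᵥ w) = -(w ⬝ᵥ (Fm *ᵥ w)) - ∑ i, α i * (w ⬝ᵥ (Zm i *ᵥ w))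
      - α' * (w ⬝ᵥ (Sbar *ᵥ w)) := by
    rw [hΘ]
    simp only [Matrix.sub_mulVec, Matrix.neg_mulVec, Matrix.sum_mulVec, Matrix.smul_mulVec,
      dotProduct_sub, dotProduct_neg, dotProduct_sum, dotProduct_smul, smul_eq_mul]
  have hDw : w ⬝ᵥ ((Dm + ∑ i, α i • Mm i) *ᵥ z) =
      w ⬝ᵥ (Dm *ᵥ z) + ∑ i, α i * (w ⬝ᵥ (Mm i *ᵥ z)) := by
    simp only [Matrix.add_mulVec, Matrix.sum_mulVec, Matrix.smul_mulVec,
      dotProduct_add, dotProduct_sum, dotProduct_smul, smul_eq_mul]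
  have hsplit : ∑ i, α i * (w ⬝ᵥ (Zm i *ᵥ w) + 2 * (w ⬝ᵥ (Mm i *ᵥ z)) + z ⬝ᵥ (Nm i *ᵥ z)) =
      ∑ i, α i * (w ⬝ᵥ (Zm i *ᵥ w)) + 2 * ∑ i, α i * (w ⬝ᵥ (Mm i *ᵥ z)) +
        ∑ i, α i * (z ⬝ᵥ (Nm i *ᵥ z)) := by
    rw [Finset.mul_sum, ← Finset.sum_add_distrib, ← Finset.sum_add_distrib]
    exact Finset.sum_congr rfl fun i _ => by ring
  have hα'S : α' * (xna ⬝ᵥ (S *ᵥ xna)) ≤ α' := mul_le_of_le_one_right hα'0 hxna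
  rw [hSw] at hΘw
  linarith
end

section
/- Fix k ≥ 1. Let x = (y, x_na) ∈ ℝ^{ny}×ℝ^{n−ny}, inputs c₀,…,c_k ∈ ℝ^m, uncertainties p₀,…,p_{k−1} ∈ ℝ^q, and predictions x̂₀ := x, x̂_{j+1} := Φ_K x̂_j + G c_j + B_p p_j. Write w := (x_na, p₀, …, p_{k−1}) and z := (y, c₀, …, c_k). Suppose symmetric F̃, matrix D̃, symmetric Ẽ satisfy ‖K C x̂_k + c_k − K C x̂_{k−1} − c_{k−1}‖₂² = wᵀ F̃ w + 2 wᵀ D̃ z + zᵀ Ẽ z identically in (w,z); for each i ∈ {0,…,k−1}, symmetric Zᵢ, matrix Mᵢ, symmetric Nᵢ satisfy ‖C_K x̂ᵢ + D_q cᵢ‖₂² − ‖pᵢ‖₂² = wᵀ Zᵢ w + 2 wᵀ Mᵢ z + zᵀ Nᵢ z identically; and S̄ := blockdiag(−S, 0). Let β₀,…,β_k ≥ 0 with Θ := −F̃ − Σ_{i=0}^{k−1} βᵢ Zᵢ − β_k S̄ ≻ 0, V̂ with V̂ᵀ V̂ = Ẽ + Σ βᵢ Nᵢ + (D̃ + Σ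 βᵢ Mᵢ)ᵀ Θ^{-1} (D̃ + Σ βᵢ Mᵢ), and suppose [[δ̄u² − β_k , −(V̂ z)ᵀ],[−V̂ z , I]] ⪰ 0. Then for all x_na with x_naᵀ S x_na ≤ 1 and all p₀,…,p_{k−1} with ‖pᵢ‖₂² ≤ ‖C_K x̂ᵢ + D_q cᵢ‖₂² for each i, the predicted input increment satisfies ‖K C x̂_k + c_k − K C x̂_{k−1} − c_{k−1}‖₂² ≤ δ̄u². -/
/-! The bound is an S-procedure argument. With the multipliers `β i` and `β'`, the constraints
`‖p i‖² ≤ ‖C_K x̂_i + D_q c_i‖²` and `x_naᵀ S x_na ≤ 1` give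
`‖Δu‖² ≤ ‖Δu‖² + ∑ β i (‖C_K x̂_i + D_q c_i‖² - ‖p i‖²) + β' (1 - x_naᵀ S x_na)`.
In terms of `w` and `z` that right-hand side is `-wᵀ Θ w + 2 wᵀ M z + zᵀ N z + β'`, where
`M = Dm + ∑ β i • Mm i` and `N = Em + ∑ β i • Nm i`. Completing the square in `w`
(`two_mul_dotProduct_sub_le`) bounds it by `‖L z‖² + β'`, and the Schur complement of the
linear matrix inequality (`dotProduct_self_le_of_fromBlocks_posSemidef`) bounds `‖L z‖²` by
`du² - β'`. -/

open Matrix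

/-- Maximum of a concave quadratic: for `Θ ≻ 0`, the function `w ↦ 2 wᵀ v - wᵀ Θ w` is at most
`vᵀ Θ⁻¹ v`, by positivity of `Θ` at `w - Θ⁻¹ v`. -/
lemma two_mul_dotProduct_sub_le {ι : Type*} [Fintype ι] [DecidableEq ι]
    {Θ : Matrix ι ι ℝ} (hΘ : Θ.PosDef) (w v : ι → ℝ) :
    2 * (w ⬝ᵥ v) - w ⬝ᵥ (Θ *ᵥ w) ≤ v ⬝ᵥ (Θ⁻¹ *ᵥ v) := by
  have hpos := hΘ.posSemidef.dotProduct_mulVec_nonneg (w - Θ⁻¹ *ᵥ v)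
  have hinv : Θ *ᵥ (Θ⁻¹ *ᵥ v) = v := by
    rw [mulVec_mulVec, mul_nonsing_inv _ ((isUnit_iff_isUnit_det _).mp hΘ.isUnit), one_mulVec]
  have hsymm : Θᵀ = Θ := by simpa using hΘ.isHermitian.eq
  have hcross : (Θ⁻¹ *ᵥ v) ⬝ᵥ (Θ *ᵥ w) = w ⬝ᵥ v := by
    rw [dotProduct_mulVec, ← mulVec_transpose, hsymm, hinv, dotProduct_comm]
  simp only [star_trivial, mulVec_sub, hinv, sub_dotProduct, dotProduct_sub, hcross] at hpos
  rw [dotProduct_comm (Θ⁻¹ *ᵥ v) v] at hpos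
  linarith

/-- The easy half of the Schur complement criterion, from evaluating the form at `(1, g)`. -/
lemma dotProduct_self_le_of_fromBlocks_posSemidef {s : ℕ} {a : ℝ} {g : Fin s → ℝ}
    (h : (Matrix.fromBlocks
        (Matrix.of fun (_ : Fin 1) (_ : Fin 1) => a)
        (Matrix.of fun (_ : Fin 1) (j : Fin s) => -(g j))
        (Matrix.of fun (i : Fin s) (_ : Fin 1) => -(g i))
        (1 : Matrix (Fin s) (Fin s) ℝ)).PosSemidef) :
    g ⬝ᵥ g ≤ a := by
  have hpos := h.dotProduct_mulVec_nonneg (Sum.elim (fun _ => 1) g)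
  rw [fromBlocks_mulVec] at hpos
  simp [dotProduct, mulVec] at hpos
  simp only [dotProduct]
  linarith

theorem stmt_14
    {ny nna m q s : ℕ} (k : ℕ) (hk : 1 ≤ k)
    (ΦK : Matrix (Fin ny ⊕ Fin nna) (Fin ny ⊕ Fin nna) ℝ)
    (G : Matrix (Fin ny ⊕ Fin nna) (Fin m) ℝ)
    (Bp : Matrix (Fin ny ⊕ Fin nna) (Fin q) ℝ)
    (CK : Matrix (Fin q) (Fin ny ⊕ Fin nna) ℝ)
    (Dq : Matrix (Fin q) (Fin m) ℝ)
    (C : Matrix (Fin ny) (Fin ny ⊕ Fin nna) ℝ) (K : Matrix (Fin m) (Fin ny) ℝ)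
    (du : ℝ) (hdu : 0 < du)
    (S : Matrix (Fin nna) (Fin nna) ℝ) (hS : S.PosSemidef)
    (y : Fin ny → ℝ) (c : ℕ → Fin m → ℝ)
    (Fm : Matrix (Fin nna ⊕ (Fin k × Fin q)) (Fin nna ⊕ (Fin k × Fin q)) ℝ) (hFms : Fm.IsSymm)
    (Dm : Matrix (Fin nna ⊕ (Fin k × Fin q)) (Fin ny ⊕ (Fin (k + 1) × Fin m)) ℝ)
    (Em : Matrix (Fin ny ⊕ (Fin (k + 1) × Fin m)) (Fin ny ⊕ (Fin (k + 1) × Fin m)) ℝ) (hEms : Em.IsSymm)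
    (hFDE : ∀ (y' : Fin ny → ℝ) (xna' : Fin nna → ℝ)
        (c' : ℕ → Fin m → ℝ) (p' : ℕ → Fin q → ℝ),
      ((K * C) *ᵥ pred ΦK G Bp (Sum.elim y' xna') c' p' k + c' k - (K * C) *ᵥ pred ΦK G Bp (Sum.elim y' xna') c' p' (k - 1) - c' (k - 1)) ⬝ᵥ
          ((K * C) *ᵥ pred ΦK G Bp (Sum.elim y' xna') c' p' k + c' k - (K * C) *ᵥ pred ΦK G Bp (Sum.elim y' xna') c' p' (k - 1) - c' (k - 1))
      = (Sum.elim xna' (fun ij => p' ij.1 ij.2) : Fin nna ⊕ (Fin k × Fin q) → ℝ) ⬝ᵥ (Fm *ᵥ (Sum.elim xna' (fun ij => p' ij.1 ij.2) : Fin nna ⊕ (Fin k × Fin q) → ℝ)) +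
        2 * ((Sum.elim xna' (fun ij => p' ij.1 ij.2) : Fin nna ⊕ (Fin k × Fin q) → ℝ) ⬝ᵥ (Dm *ᵥ (Sum.elim y' (fun ij => c' ij.1 ij.2) : Fin ny ⊕ (Fin (k + 1) × Fin m) → ℝ))) +
        (Sum.elim y' (fun ij => c' ij.1 ij.2) : Fin ny ⊕ (Fin (k + 1) × Fin m) → ℝ) ⬝ᵥ (Em *ᵥ (Sum.elim y' (fun ij => c' ij.1 ij.2) : Fin ny ⊕ (Fin (k + 1) × Fin m) → ℝ)))
    (Zm : Fin k → Matrix (Fin nna ⊕ (Fin k × Fin q)) (Fin nna ⊕ (Fin k × Fin q)) ℝ) (hZs : ∀ i, (Zm i).IsSymm)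
    (Mm : Fin k → Matrix (Fin nna ⊕ (Fin k × Fin q)) (Fin ny ⊕ (Fin (k + 1) × Fin m)) ℝ)
    (Nm : Fin k → Matrix (Fin ny ⊕ (Fin (k + 1) × Fin m)) (Fin ny ⊕ (Fin (k + 1) × Fin m)) ℝ) (hNs : ∀ i, (Nm i).IsSymm)
    (hZMN : ∀ (i : Fin k) (y' : Fin ny → ℝ) (xna' : Fin nna → ℝ)
        (c' : ℕ → Fin m → ℝ) (p' : ℕ → Fin q → ℝ),
      (CK *ᵥ pred ΦK G Bp (Sum.elim y' xna') c' p' (i : ℕ) + Dq *ᵥ c' i) ⬝ᵥ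
          (CK *ᵥ pred ΦK G Bp (Sum.elim y' xna') c' p' (i : ℕ) + Dq *ᵥ c' i) -
        (p' i) ⬝ᵥ (p' i)
      = (Sum.elim xna' (fun ij => p' ij.1 ij.2) : Fin nna ⊕ (Fin k × Fin q) → ℝ) ⬝ᵥ ((Zm i) *ᵥ (Sum.elim xna' (fun ij => p' ij.1 ij.2) : Fin nna ⊕ (Fin k × Fin q) → ℝ)) +
        2 * ((Sum.elim xna' (fun ij => p' ij.1 ij.2) : Fin nna ⊕ (Fin k × Fin q) → ℝ) ⬝ᵥ ((Mm i) *ᵥ (Sum.elim y' (fun ij => c' ij.1 ij.2) : Fin ny ⊕ (Fin (k + 1) × Fin m) → ℝ))) +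
        (Sum.elim y' (fun ij => c' ij.1 ij.2) : Fin ny ⊕ (Fin (k + 1) × Fin m) → ℝ) ⬝ᵥ ((Nm i) *ᵥ (Sum.elim y' (fun ij => c' ij.1 ij.2) : Fin ny ⊕ (Fin (k + 1) × Fin m) → ℝ)))
    (Sbar : Matrix (Fin nna ⊕ (Fin k × Fin q)) (Fin nna ⊕ (Fin k × Fin q)) ℝ)
    (hSbar : Sbar = Matrix.fromBlocks (-S) 0 0 0)
    (β : Fin k → ℝ) (hβ : ∀ i, 0 ≤ β i) (β' : ℝ) (hβ'0 : 0 ≤ β')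
    (Θ : Matrix (Fin nna ⊕ (Fin k × Fin q)) (Fin nna ⊕ (Fin k × Fin q)) ℝ)
    (hΘ : Θ = -Fm - (∑ i, β i • Zm i) - β' • Sbar) (hΘpos : Θ.PosDef)
    (L : Matrix (Fin s) (Fin ny ⊕ (Fin (k + 1) × Fin m)) ℝ)
    (hL : Lᵀ * L = Em + (∑ i, β i • Nm i) +
      (Dm + ∑ i, β i • Mm i)ᵀ * Θ⁻¹ * (Dm + ∑ i, β i • Mm i))
    (hLMI : (Matrix.fromBlocks
        (Matrix.of fun (_ : Fin 1) (_ : Fin 1) => du ^ 2 - β')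
        (Matrix.of fun (_ : Fin 1) (j : Fin s) => -((L *ᵥ (Sum.elim y (fun ij => c ij.1 ij.2) : Fin ny ⊕ (Fin (k + 1) × Fin m) → ℝ)) j))
        (Matrix.of fun (i : Fin s) (_ : Fin 1) => -((L *ᵥ (Sum.elim y (fun ij => c ij.1 ij.2) : Fin ny ⊕ (Fin (k + 1) × Fin m) → ℝ)) i))
        (1 : Matrix (Fin s) (Fin s) ℝ)).PosSemidef) :
    ∀ (xna : Fin nna → ℝ) (p : ℕ → Fin q → ℝ),
      xna ⬝ᵥ (S *ᵥ xna) ≤ 1 →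
      (∀ i : Fin k,
        (p i) ⬝ᵥ (p i) ≤
          (CK *ᵥ pred ΦK G Bp (Sum.elim y xna) c p (i : ℕ) + Dq *ᵥ c i) ⬝ᵥ
            (CK *ᵥ pred ΦK G Bp (Sum.elim y xna) c p (i : ℕ) + Dq *ᵥ c i)) →
      (((K * C) *ᵥ pred ΦK G Bp (Sum.elim y xna) c p k + c k - (K * C) *ᵥ pred ΦK G Bp (Sum.elim y xna) c p (k - 1) - c (k - 1)) ⬝ᵥ
          ((K * C) *ᵥ pred ΦK G Bp (Sum.elim y xna) c p k + c k - (K * C) *ᵥ pred ΦK G Bp (Sum.elim y xna) c p (k - 1) - c (k - 1))) ≤ du ^ 2 := by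
  intro xna p hxS hp
  have hF := hFDE y xna c p
  have hZ := fun i => hZMN i y xna c p
  set w : Fin nna ⊕ (Fin k × Fin q) → ℝ := Sum.elim xna (fun ij => p ij.1 ij.2) with hw
  set z : Fin ny ⊕ (Fin (k + 1) × Fin m) → ℝ := Sum.elim y (fun ij => c ij.1 ij.2)
  have hschur := dotProduct_self_le_of_fromBlocks_posSemidef hLMI
  have hsquare := two_mul_dotProduct_sub_le hΘpos w ((Dm + ∑ i, β i • Mm i) *ᵥ z)
  have hmult : 0 ≤ ∑ i, β i * (w ⬝ᵥ (Zm i *ᵥ w) + 2 * (w ⬝ᵥ (Mm i *ᵥ z)) + z ⬝ᵥ (Nm i *ᵥ z)) := by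
    refine Finset.sum_nonneg fun i _ => mul_nonneg (hβ i) ?_
    rw [← hZ i]
    exact sub_nonneg.mpr (hp i)
  simp only [mul_add, Finset.sum_add_distrib] at hmult
  have hSw : w ⬝ᵥ (Sbar *ᵥ w) = -(xna ⬝ᵥ (S *ᵥ xna)) := by
    rw [hSbar, hw, fromBlocks_mulVec]
    simp [neg_mulVec]
  have hΘw : w ⬝ᵥ (Θ *ᵥ w) = -(w ⬝ᵥ (Fm *ᵥ w)) - ∑ i, β i * (w ⬝ᵥ (Zm i *ᵥ w))
      + β' * (xna ⬝ᵥ (S *ᵥ xna)) := by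
    rw [hΘ]
    simp only [sub_mulVec, neg_mulVec, smul_mulVec, sum_mulVec, dotProduct_sub, dotProduct_neg,
      dotProduct_smul, dotProduct_sum, smul_eq_mul, hSw]
    ring
  have hMz : w ⬝ᵥ ((Dm + ∑ i, β i • Mm i) *ᵥ z)
      = w ⬝ᵥ (Dm *ᵥ z) + ∑ i, β i * (w ⬝ᵥ (Mm i *ᵥ z)) := by
    simp only [add_mulVec, smul_mulVec, sum_mulVec, dotProduct_add,
      dotProduct_smul, dotProduct_sum, smul_eq_mul]
  have hLz : (L *ᵥ z) ⬝ᵥ (L *ᵥ z) = z ⬝ᵥ (Em *ᵥ z) + ∑ i, β i * (z ⬝ᵥ (Nm i *ᵥ z))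
      + ((Dm + ∑ i, β i • Mm i) *ᵥ z) ⬝ᵥ (Θ⁻¹ *ᵥ ((Dm + ∑ i, β i • Mm i) *ᵥ z)) := by
    have hgram : (L *ᵥ z) ⬝ᵥ (L *ᵥ z) = z ⬝ᵥ ((Lᵀ * L) *ᵥ z) := by
      rw [← mulVec_mulVec, dotProduct_mulVec z, vecMul_transpose]
    have hquad : ((Dm + ∑ i, β i • Mm i) *ᵥ z) ⬝ᵥ (Θ⁻¹ *ᵥ ((Dm + ∑ i, β i • Mm i) *ᵥ z))
        = z ⬝ᵥ (((Dm + ∑ i, β i • Mm i)ᵀ * Θ⁻¹ * (Dm + ∑ i, β i • Mm i)) *ᵥ z) := by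
      rw [← mulVec_mulVec, ← mulVec_mulVec, dotProduct_mulVec z, vecMul_transpose]
    rw [hgram, hquad, hL]
    simp only [add_mulVec _ _ z, smul_mulVec, sum_mulVec, dotProduct_add,
      dotProduct_smul, dotProduct_sum, smul_eq_mul]
  have hmulS : β' * (xna ⬝ᵥ (S *ᵥ xna)) ≤ β' := mul_le_of_le_one_right hβ'0 hxS
  have htwo : ∑ i, β i * (2 * (w ⬝ᵥ (Mm i *ᵥ z))) = 2 * ∑ i, β i * (w ⬝ᵥ (Mm i *ᵥ z)) := by
    rw [Finset.mul_sum]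
    exact Finset.sum_congr rfl fun i _ => by ring
  rw [hF]
  rw [hMz, hΘw] at hsquare
  rw [hLz] at hschur
  linarith
end
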